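/- For every x ∈ ℝ the supremum defining W(x) is attained at a unique σ_x ∈ ℝ, characterized by Ψ(σ_x) = x; W is twice differentiable with W'(x) = σ_x and W''(x) = 1/Ψ'(σ_x), and consequently κ₁ ≤ W''(x) ≤ κ₂ for all x ∈ ℝ. -/

import Mathlib

/-!
Let `G_σ` be the probability measure on `ℝ` with density proportional to `exp (-ψ y + σ y)`. These
measures form an exponential family: `L σ = log ∫ exp (-ψ y + σ y) dy` is, up to a constant, the
cumulant generating function of `G_0`, so `L' = Ψ` is the mean and `Ψ'` the variance of `G_σ`.

Integrating by parts against the potential `φ y = ψ y - σ y` of `G_σ` gives `E φ' = 0` and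
`E (y φ') = 1`, that is, `cov (y, φ') = 1`. A nondecreasing function of `y` has nonnegative
covariance with `y`; applied to `φ' y - κ₁ y` and `κ₂ y - φ' y`, this yields `κ₁ Ψ' ≤ 1 ≤ κ₂ Ψ'`.

Hence `Ψ` is an increasing bijection of `ℝ`. As `L` is convex with derivative `Ψ`, the map
`σ ↦ σ x - L σ` is maximal exactly at `σ = Ψ⁻¹ x`. Its maximal value `W x` then has derivative
`Ψ⁻¹ x`, and differentiating the inverse function gives `W'' = 1 / (Ψ' ∘ Ψ⁻¹)`.
-/

noncomputable section

open MeasureTheory Real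

/-- The Cauchy–Born strain energy `W(x)`. -/
def W (ψ : ℝ → ℝ) (x : ℝ) : ℝ :=
  ⨆ σ : ℝ, (σ * x - Real.log (∫ y : ℝ, Real.exp (-ψ y + σ * y)))

/-- `Ψ(σ) = (∫ y exp(-ψ(y)+σy) dy) / (∫ exp(-ψ(y)+σy) dy)`. -/
def Psi (ψ : ℝ → ℝ) (σ : ℝ) : ℝ :=
  (∫ y : ℝ, y * Real.exp (-ψ y + σ * y)) / (∫ y : ℝ, Real.exp (-ψ y + σ * y))

open Filter ProbabilityTheory Topology

section Calculus

variable {f f' : ℝ → ℝ} {c : ℝ}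

lemma add_mul_sub_le_of_monotone_deriv (hf : ∀ x, HasDerivAt f (f' x) x) (hf' : Monotone f')
    (a b : ℝ) : f a + f' a * (b - a) ≤ f b := by
  have hderiv : deriv f = f' := funext fun x => (hf x).deriv
  have hconv : ConvexOn ℝ Set.univ f :=
    Monotone.convexOn_univ_of_deriv (fun x => (hf x).differentiableAt) (hderiv ▸ hf')
  rcases lt_trichotomy a b with hab | rfl | hba
  · have hslope := hconv.le_slope_of_hasDerivAt (Set.mem_univ a) (Set.mem_univ b) hab (hf a)
    rw [slope_def_field, le_div_iff₀ (sub_pos.2 hab)] at hslope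
    linarith
  · simp
  · have hslope := hconv.slope_le_of_hasDerivAt (Set.mem_univ b) (Set.mem_univ a) hba (hf a)
    rw [slope_def_field, div_le_iff₀ (sub_pos.2 hba)] at hslope
    linarith

lemma exists_orderIso_eq_of_le_deriv (hf : ∀ x, HasDerivAt f (f' x) x) (hc : 0 < c)
    (hf' : ∀ x, c ≤ f' x) : ∃ e : ℝ ≃o ℝ, ⇑e = f := by
  have hdiff : Differentiable ℝ f := fun x => (hf x).differentiableAt
  have hderiv (x : ℝ) : c ≤ deriv f x := (hf x).deriv.symm ▸ hf' x
  have hmono : StrictMono f := strictMono_of_deriv_pos fun x => hc.trans_le (hderiv x)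
  have hgrowth := mul_sub_le_image_sub_of_le_deriv hdiff hderiv
  have htop : Tendsto f atTop atTop := by
    refine tendsto_atTop_mono' (f₁ := fun y => f 0 + c * y) _ ?_
      (tendsto_atTop_add_const_left _ _ (tendsto_id.const_mul_atTop hc))
    filter_upwards [eventually_ge_atTop 0] with y hy
    linarith [hgrowth hy]
  have hbot : Tendsto f atBot atBot := by
    refine tendsto_atBot_mono' (f₁ := fun y => f 0 + c * y) _ ?_
      (tendsto_atBot_add_const_left _ _ (tendsto_id.const_mul_atBot hc))
    filter_upwards [eventually_le_atBot 0] with y hy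
    linarith [hgrowth hy]
  exact ⟨hmono.orderIsoOfSurjective f (hdiff.continuous.surjective htop hbot), rfl⟩

lemma hasDerivAt_orderIso_symm {e : ℝ ≃o ℝ} {d x : ℝ} (he : HasDerivAt e d (e.symm x))
    (hd : d ≠ 0) : HasDerivAt e.symm d⁻¹ x :=
  he.of_local_left_inverse e.symm.continuous.continuousAt hd
    (Eventually.of_forall e.apply_symm_apply)

lemma monotone_sub_mul_of_le_deriv (hf : Differentiable ℝ f) (hf' : ∀ x, c ≤ deriv f x) :
    Monotone fun x => f x - c * x := fun x y hxy => by
  linarith [mul_sub_le_image_sub_of_le_deriv hf hf' hxy]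

lemma monotone_mul_sub_of_deriv_le (hf : Differentiable ℝ f) (hf' : ∀ x, deriv f x ≤ c) :
    Monotone fun x => c * x - f x := fun x y hxy => by
  linarith [image_sub_le_mul_sub_of_deriv_le hf hf' hxy]

end Calculus

section LegendreTransform

/-- The Legendre transform (convex conjugate) of a function on the line. As a real-valued supremum
it is meaningful only where `σ ↦ σ * x - L σ` is bounded above. -/
def legendreTransform (L : ℝ → ℝ) (x : ℝ) : ℝ :=
  ⨆ σ : ℝ, (σ * x - L σ)

variable {L L' : ℝ → ℝ} {x σ : ℝ}

lemma forall_mul_sub_le_iff_deriv_eq (hL : ∀ σ, HasDerivAt L (L' σ) σ) (hL' : Monotone L') :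
    (∀ τ, τ * x - L τ ≤ σ * x - L σ) ↔ L' σ = x := by
  constructor
  · intro hmax
    have hderiv : HasDerivAt (fun τ => τ * x - L τ) (1 * x - L' σ) σ :=
      ((hasDerivAt_id σ).mul_const x).sub (hL σ)
    have hcrit := IsLocalMax.hasDerivAt_eq_zero (Eventually.of_forall hmax) hderiv
    linarith
  · rintro rfl τ
    linarith [add_mul_sub_le_of_monotone_deriv hL hL' σ τ]

lemma legendreTransform_eq_of_forall_le (hσ : ∀ τ, τ * x - L τ ≤ σ * x - L σ) :
    legendreTransform L x = σ * x - L σ :=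
  le_antisymm (ciSup_le hσ)
    (le_ciSup (f := fun τ => τ * x - L τ) ⟨_, Set.forall_mem_range.2 hσ⟩ σ)

lemma hasDerivAt_legendreTransform {e : ℝ ≃o ℝ} (hL : ∀ σ, HasDerivAt L (e σ) σ) (x : ℝ) :
    HasDerivAt (legendreTransform L) (e.symm x) x := by
  have hmax (y : ℝ) : ∀ τ, τ * y - L τ ≤ e.symm y * y - L (e.symm y) :=
    (forall_mul_sub_le_iff_deriv_eq hL e.monotone).2 (e.apply_symm_apply y)
  have hcont : Tendsto (fun y => e.symm y - e.symm x) (𝓝 x) (𝓝 0) :=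
    tendsto_sub_nhds_zero_iff.2 e.symm.continuous.continuousAt
  -- Comparing each maximizer with the other one's objective traps the increment of the transform
  -- between `e.symm x * (y - x)` and `e.symm y * (y - x)`.
  have hbound (y : ℝ) : ‖legendreTransform L y - legendreTransform L x - (y - x) * e.symm x‖ ≤
      ‖(e.symm y - e.symm x) * (y - x)‖ := by
    rw [legendreTransform_eq_of_forall_le (hmax x), legendreTransform_eq_of_forall_le (hmax y)]
    refine abs_le_abs_of_nonneg ?_ ?_
    · linarith [hmax y (e.symm x)]
    · linarith [hmax x (e.symm y)]
  rw [hasDerivAt_iff_isLittleO]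
  refine (Asymptotics.isBigO_of_le _ hbound).trans_isLittleO ?_
  simpa only [one_mul] using
    ((Asymptotics.isLittleO_one_iff ℝ).2 hcont).mul_isBigO (Asymptotics.isBigO_refl (· - x) _)

end LegendreTransform

section Covariance

variable {Ω : Type*} {mΩ : MeasurableSpace Ω} {μ : Measure Ω} [IsProbabilityMeasure μ]
  {X : Ω → ℝ} {f : ℝ → ℝ} {κ : ℝ}

lemma covariance_comp_nonneg (hX : MemLp X 2 μ) (hfX : MemLp (fun ω => f (X ω)) 2 μ)
    (hf : Monotone f) : 0 ≤ cov[X, fun ω => f (X ω); μ] := by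
  set m := μ[X]
  have hX₁ : Integrable X μ := hX.integrable one_le_two
  have hfX₁ : Integrable (fun ω => f (X ω)) μ := hfX.integrable one_le_two
  have hcentered : ∫ ω, (X ω - m) ∂μ = 0 := by
    rw [integral_sub hX₁ (integrable_const m)]
    simp [m]
  have hcov : cov[fun ω => X ω - m, fun ω => f (X ω) - f m; μ] =
      ∫ ω, (X ω - m) * (f (X ω) - f m) ∂μ -
        (∫ ω, (X ω - m) ∂μ) * ∫ ω, (f (X ω) - f m) ∂μ :=
    covariance_eq_sub (hX.sub (memLp_const m)) (hfX.sub (memLp_const (f m)))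
  calc 0 ≤ ∫ ω, (X ω - m) * (f (X ω) - f m) ∂μ := by
        refine integral_nonneg fun ω => ?_
        rcases le_total m (X ω) with h | h
        · exact mul_nonneg (sub_nonneg.2 h) (sub_nonneg.2 (hf h))
        · exact mul_nonneg_of_nonpos_of_nonpos (sub_nonpos.2 h) (sub_nonpos.2 (hf h))
    _ = cov[fun ω => X ω - m, fun ω => f (X ω) - f m; μ] := by
        rw [hcov, hcentered, zero_mul, sub_zero]
    _ = cov[X, fun ω => f (X ω); μ] := by
        rw [covariance_sub_const_left hX₁, covariance_sub_const_right hfX₁]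

lemma mul_variance_le_covariance_comp (hX : MemLp X 2 μ) (hfX : MemLp (fun ω => f (X ω)) 2 μ)
    (hf : Monotone fun y => f y - κ * y) : κ * Var[X; μ] ≤ cov[X, fun ω => f (X ω); μ] := by
  have hκX : MemLp (fun ω => κ * X ω) 2 μ := hX.const_mul κ
  have hcov := covariance_comp_nonneg hX (hfX.sub hκX) hf
  rw [covariance_fun_sub_right hX hfX hκX, covariance_const_mul_right,
    covariance_self hX.aemeasurable] at hcov
  exact sub_nonneg.1 hcov

lemma covariance_comp_le_mul_variance (hX : MemLp X 2 μ) (hfX : MemLp (fun ω => f (X ω)) 2 μ)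
    (hf : Monotone fun y => κ * y - f y) : cov[X, fun ω => f (X ω); μ] ≤ κ * Var[X; μ] := by
  have hκX : MemLp (fun ω => κ * X ω) 2 μ := hX.const_mul κ
  have hcov := covariance_comp_nonneg hX (hκX.sub hfX) hf
  rw [covariance_fun_sub_right hX hκX hfX, covariance_const_mul_right,
    covariance_self hX.aemeasurable] at hcov
  exact sub_nonneg.1 hcov

end Covariance

lemma memLp_comp_of_monotone {Ω : Type*} {mΩ : MeasurableSpace Ω} {μ : Measure Ω}
    [IsFiniteMeasure μ] {X : Ω → ℝ} {f : ℝ → ℝ} {κ : ℝ} {p : ENNReal} (hX : MemLp X p μ)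
    (hf : Monotone f) (hκf : Monotone fun y => κ * y - f y) :
    MemLp (fun ω => f (X ω)) p μ := by
  refine ((memLp_const |f 0|).add (hX.norm.const_mul κ)).mono'
    (hf.measurable.comp_aemeasurable hX.aemeasurable).aestronglyMeasurable
    (Eventually.of_forall fun ω => ?_)
  simp only [Pi.add_apply, Real.norm_eq_abs]
  rcases le_total 0 (X ω) with h | h
  · rw [abs_of_nonneg h, abs_le]
    constructor <;> linarith [neg_abs_le (f 0), le_abs_self (f 0), hf h, hκf h]
  · rw [abs_of_nonpos h, abs_le]
    constructor <;> linarith [neg_abs_le (f 0), le_abs_self (f 0), hf h, hκf h]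

section GibbsMeasure

/-- The Gibbs measure of the potential `φ`: the probability measure on `ℝ` with density
proportional to `exp (-φ)`, or the zero measure if `exp (-φ)` is not integrable. -/
def gibbsMeasure (φ : ℝ → ℝ) : Measure ℝ :=
  volume.tilted fun y => -φ y

variable {φ φ' : ℝ → ℝ} {κ κ₁ κ₂ : ℝ}

lemma isProbabilityMeasure_gibbsMeasure (hint : Integrable fun y => exp (-φ y)) :
    IsProbabilityMeasure (gibbsMeasure φ) :=
  isProbabilityMeasure_tilted hint

lemma integrable_gibbsMeasure_iff (hint : Integrable fun y => exp (-φ y)) {f : ℝ → ℝ} :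
    Integrable f (gibbsMeasure φ) ↔ Integrable fun y => f y * exp (-φ y) := by
  simp only [gibbsMeasure, integrable_tilted_iff hint, smul_eq_mul, mul_comm]

lemma integral_gibbsMeasure (f : ℝ → ℝ) :
    ∫ y, f y ∂gibbsMeasure φ = (∫ y, f y * exp (-φ y)) / ∫ y, exp (-φ y) := by
  rw [gibbsMeasure, integral_tilted, ← integral_div]
  refine integral_congr_ae (Eventually.of_forall fun y => ?_)
  simp only [smul_eq_mul]
  ring

lemma tilted_mul_gibbsMeasure (hint : Integrable fun y => exp (-φ y)) (σ : ℝ) :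
    (gibbsMeasure φ).tilted (σ * id ·) = gibbsMeasure fun y => φ y - σ * y := by
  rw [gibbsMeasure, tilted_tilted hint, gibbsMeasure]
  congr 1
  ext y
  simp only [Pi.add_apply, id_eq]
  ring

lemma integral_mul_deriv_gibbsMeasure (hint : Integrable fun y => exp (-φ y))
    (hφ : ∀ y, HasDerivAt φ (φ' y) y) {f f' : ℝ → ℝ} (hf : ∀ y, HasDerivAt f (f' y) y)
    (hfi : Integrable f (gibbsMeasure φ)) (hfi' : Integrable f' (gibbsMeasure φ))
    (hfφ : Integrable (f * φ') (gibbsMeasure φ)) :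
    ∫ y, f y * φ' y ∂gibbsMeasure φ = ∫ y, f' y ∂gibbsMeasure φ := by
  rw [integrable_gibbsMeasure_iff hint] at hfi hfi' hfφ
  have hexp (y : ℝ) : HasDerivAt (fun y => exp (-φ y)) (exp (-φ y) * -φ' y) y := (hφ y).neg.exp
  have hbyparts := integral_mul_deriv_eq_deriv_mul_of_integrable (fun y _ => hf y)
    (fun y _ => hexp y) (hfφ.neg.congr (Eventually.of_forall fun y => by
      simp only [Pi.neg_apply, Pi.mul_apply]; ring)) hfi' hfi
  rw [integral_gibbsMeasure, integral_gibbsMeasure, ← neg_neg (∫ y, f' y * exp (-φ y)), ← hbyparts,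
    ← integral_neg]
  congr 2 with y
  ring

lemma covariance_id_deriv_gibbsMeasure (hint : Integrable fun y => exp (-φ y))
    (hφ : ∀ y, HasDerivAt φ (φ' y) y) (hid : MemLp id 2 (gibbsMeasure φ))
    (hφ' : MemLp φ' 2 (gibbsMeasure φ)) : cov[id, φ'; gibbsMeasure φ] = 1 := by
  have := isProbabilityMeasure_gibbsMeasure hint
  have hmean : ∫ y, φ' y ∂gibbsMeasure φ = 0 := by
    simpa using integral_mul_deriv_gibbsMeasure hint hφ (fun y => hasDerivAt_const y 1)
      (integrable_const 1) (integrable_const 0)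
      (by simpa [Pi.mul_def] using hφ'.integrable one_le_two)
  have hmoment : ∫ y, y * φ' y ∂gibbsMeasure φ = 1 := by
    simpa using integral_mul_deriv_gibbsMeasure hint hφ hasDerivAt_id
      (hid.integrable one_le_two) (integrable_const 1) (hid.integrable_mul hφ')
  rw [covariance_eq_sub hid hφ', hmean, mul_zero, sub_zero]
  exact hmoment

lemma quadratic_le_of_monotone_deriv_sub (hφ : ∀ y, HasDerivAt φ (φ' y) y)
    (hφ' : Monotone fun y => φ' y - κ * y) (y : ℝ) : φ 0 + φ' 0 * y + κ / 2 * y ^ 2 ≤ φ y := by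
  have hderiv (y : ℝ) : HasDerivAt (fun y => φ y - κ / 2 * y ^ 2) (φ' y - κ * y) y :=
    ((hφ y).sub ((hasDerivAt_pow 2 y).const_mul (κ / 2))).congr_deriv (by ring)
  have htangent := add_mul_sub_le_of_monotone_deriv hderiv hφ' 0 y
  ring_nf at htangent ⊢
  linarith

lemma integrable_exp_neg_of_monotone_deriv_sub (hφ : ∀ y, HasDerivAt φ (φ' y) y) (hκ : 0 < κ)
    (hφ' : Monotone fun y => φ' y - κ * y) : Integrable fun y => exp (-φ y) := by
  have hcont : Continuous φ := continuous_iff_continuousAt.2 fun y => (hφ y).continuousAt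
  refine ((integrable_exp_neg_mul_sq (b := κ / 4) (by positivity)).const_mul
    (exp (-φ 0 + φ' 0 ^ 2 / κ))).mono' (by fun_prop) (Eventually.of_forall fun y => ?_)
  rw [Real.norm_eq_abs, abs_exp, ← exp_add, exp_le_exp]
  have hquad := quadratic_le_of_monotone_deriv_sub hφ hφ' y
  have hyoung : 0 ≤ φ' 0 * y + κ / 4 * y ^ 2 + φ' 0 ^ 2 / κ := by
    calc 0 ≤ (κ * y / 2 + φ' 0) ^ 2 / κ := by positivity
      _ = φ' 0 * y + κ / 4 * y ^ 2 + φ' 0 ^ 2 / κ := by field_simp; ring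
  linarith

lemma hasDerivAt_sub_mul (hφ : ∀ y, HasDerivAt φ (φ' y) y) (σ y : ℝ) :
    HasDerivAt (fun y => φ y - σ * y) (φ' y - σ) y := by
  simpa only [mul_one] using (hφ y).fun_sub ((hasDerivAt_id' y).const_mul σ)

lemma monotone_deriv_sub_const (hφ' : Monotone fun y => φ' y - κ * y) (σ : ℝ) :
    Monotone fun y => φ' y - σ - κ * y := fun a b hab => by
  linarith [hφ' hab]

lemma integrableExpSet_gibbsMeasure (hφ : ∀ y, HasDerivAt φ (φ' y) y) (hκ : 0 < κ)
    (hφ' : Monotone fun y => φ' y - κ * y) : integrableExpSet id (gibbsMeasure φ) = Set.univ := by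
  refine Set.eq_univ_of_forall fun σ => ?_
  have hint := integrable_exp_neg_of_monotone_deriv_sub hφ hκ hφ'
  have htilt := integrable_exp_neg_of_monotone_deriv_sub (hasDerivAt_sub_mul hφ σ) hκ
    (monotone_deriv_sub_const hφ' σ)
  rw [integrableExpSet, Set.mem_ofPred_eq, integrable_gibbsMeasure_iff hint]
  refine htilt.congr (Eventually.of_forall fun y => ?_)
  simp only [id_eq, ← exp_add]
  ring_nf

lemma variance_gibbsMeasure_bounds (hφ : ∀ y, HasDerivAt φ (φ' y) y) (hκ₁ : 0 < κ₁)
    (hlow : Monotone fun y => φ' y - κ₁ * y) (hup : Monotone fun y => κ₂ * y - φ' y) :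
    κ₁ * Var[id; gibbsMeasure φ] ≤ 1 ∧ 1 ≤ κ₂ * Var[id; gibbsMeasure φ] := by
  have hint := integrable_exp_neg_of_monotone_deriv_sub hφ hκ₁ hlow
  have := isProbabilityMeasure_gibbsMeasure hint
  have hid : MemLp id 2 (gibbsMeasure φ) := memLp_of_mem_interior_integrableExpSet
    (by simp [integrableExpSet_gibbsMeasure hφ hκ₁ hlow]) 2
  have hmono : Monotone φ' := by simpa using hlow.add (monotone_id.const_mul hκ₁.le)
  have hφ'L2 : MemLp φ' 2 (gibbsMeasure φ) := memLp_comp_of_monotone hid hmono hup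
  rw [← covariance_id_deriv_gibbsMeasure hint hφ hid hφ'L2]
  exact ⟨mul_variance_le_covariance_comp hid hφ'L2 hlow,
    covariance_comp_le_mul_variance hid hφ'L2 hup⟩

end GibbsMeasure

section CauchyBorn

/-- The log-partition function of the potential `ψ` under the load `σ`; its Legendre transform is
`W ψ`, and it takes the junk value `0` where the integral diverges. -/
def logPartition (ψ : ℝ → ℝ) (σ : ℝ) : ℝ :=
  log (∫ y, exp (-ψ y + σ * y))

variable {ψ ψ' : ℝ → ℝ} {κ₁ κ₂ : ℝ}

lemma Psi_eq_integral_gibbsMeasure (ψ : ℝ → ℝ) (σ : ℝ) :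
    Psi ψ σ = ∫ y, y ∂gibbsMeasure fun y => ψ y - σ * y := by
  rw [integral_gibbsMeasure, Psi]
  simp only [neg_sub', sub_neg_eq_add]

lemma cgf_gibbsMeasure (hψ : ∀ y, HasDerivAt ψ (ψ' y) y) (hκ₁ : 0 < κ₁)
    (hψ' : Monotone fun y => ψ' y - κ₁ * y) (σ : ℝ) :
    cgf id (gibbsMeasure ψ) σ = logPartition ψ σ - logPartition ψ 0 := by
  have hint (σ : ℝ) : Integrable fun y => exp (-ψ y + σ * y) := by
    simpa only [neg_sub', sub_neg_eq_add] using integrable_exp_neg_of_monotone_deriv_sub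
      (hasDerivAt_sub_mul hψ σ) hκ₁ (monotone_deriv_sub_const hψ' σ)
  have hpos (σ : ℝ) := (integral_exp_pos (hint σ)).ne'
  rw [logPartition, logPartition, ← log_div (hpos σ) (hpos 0), cgf, mgf, gibbsMeasure,
    integral_exp_tilted]
  simp

lemma deriv_cgf_gibbsMeasure (hψ : ∀ y, HasDerivAt ψ (ψ' y) y) (hκ₁ : 0 < κ₁)
    (hψ' : Monotone fun y => ψ' y - κ₁ * y) : deriv (cgf id (gibbsMeasure ψ)) = Psi ψ := by
  ext σ
  rw [← integral_tilted_mul_self (by simp [integrableExpSet_gibbsMeasure hψ hκ₁ hψ']),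
    tilted_mul_gibbsMeasure (integrable_exp_neg_of_monotone_deriv_sub hψ hκ₁ hψ'),
    Psi_eq_integral_gibbsMeasure]
  rfl

lemma hasDerivAt_logPartition (hψ : ∀ y, HasDerivAt ψ (ψ' y) y) (hκ₁ : 0 < κ₁)
    (hψ' : Monotone fun y => ψ' y - κ₁ * y) (σ : ℝ) :
    HasDerivAt (logPartition ψ) (Psi ψ σ) σ := by
  have hcgf : HasDerivAt (cgf id (gibbsMeasure ψ)) (Psi ψ σ) σ := by
    rw [← deriv_cgf_gibbsMeasure hψ hκ₁ hψ']
    exact (analyticAt_cgf (by simp [integrableExpSet_gibbsMeasure hψ hκ₁ hψ'])).differentiableAt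
      |>.hasDerivAt
  simpa [funext (cgf_gibbsMeasure hψ hκ₁ hψ')] using hcgf

lemma hasDerivAt_Psi (hψ : ∀ y, HasDerivAt ψ (ψ' y) y) (hκ₁ : 0 < κ₁)
    (hψ' : Monotone fun y => ψ' y - κ₁ * y) (σ : ℝ) :
    HasDerivAt (Psi ψ) Var[id; gibbsMeasure fun y => ψ y - σ * y] σ := by
  have hσ : σ ∈ interior (integrableExpSet id (gibbsMeasure ψ)) := by
    simp [integrableExpSet_gibbsMeasure hψ hκ₁ hψ']
  rw [← tilted_mul_gibbsMeasure (integrable_exp_neg_of_monotone_deriv_sub hψ hκ₁ hψ'),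
    variance_tilted_mul hσ, iteratedDeriv_succ, iteratedDeriv_one,
    ← deriv_cgf_gibbsMeasure hψ hκ₁ hψ']
  exact (analyticAt_cgf hσ).deriv.differentiableAt.hasDerivAt

lemma deriv_Psi_bounds (hψ : ∀ y, HasDerivAt ψ (ψ' y) y) (hκ₁ : 0 < κ₁)
    (hlow : Monotone fun y => ψ' y - κ₁ * y) (hup : Monotone fun y => κ₂ * y - ψ' y) (σ : ℝ) :
    κ₁ * deriv (Psi ψ) σ ≤ 1 ∧ 1 ≤ κ₂ * deriv (Psi ψ) σ := by
  rw [(hasDerivAt_Psi hψ hκ₁ hlow σ).deriv]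
  refine variance_gibbsMeasure_bounds (hasDerivAt_sub_mul hψ σ) hκ₁
    (monotone_deriv_sub_const hlow σ) ?_
  exact fun a b hab => by linarith [hup hab]

end CauchyBorn

theorem legendre_transform_properties_general {ψ ψ' : ℝ → ℝ} {κ₁ κ₂ : ℝ}
    (hψ : ∀ y, HasDerivAt ψ (ψ' y) y) (hκ₁ : 0 < κ₁)
    (hlow : Monotone fun y => ψ' y - κ₁ * y) (hup : Monotone fun y => κ₂ * y - ψ' y) (x : ℝ) :
    ∃ σx : ℝ,
      (∀ σ, σ * x - logPartition ψ σ ≤ σx * x - logPartition ψ σx) ∧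
      (∀ σ', (∀ σ, σ * x - logPartition ψ σ ≤ σ' * x - logPartition ψ σ') → σ' = σx) ∧
      Psi ψ σx = x ∧
      HasDerivAt (W ψ) σx x ∧
      DifferentiableAt ℝ (deriv (W ψ)) x ∧
      deriv (deriv (W ψ)) x = 1 / deriv (Psi ψ) σx ∧
      κ₁ ≤ deriv (deriv (W ψ)) x ∧ deriv (deriv (W ψ)) x ≤ κ₂ := by
  have hbounds := deriv_Psi_bounds hψ hκ₁ hlow hup
  have hκ₂ : 0 < κ₂ := by linarith [hlow zero_le_one, hup zero_le_one]
  have hPsi_lower (σ : ℝ) : κ₂⁻¹ ≤ deriv (Psi ψ) σ := (inv_le_iff_one_le_mul₀' hκ₂).2 (hbounds σ).2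
  have hPsi (σ : ℝ) : HasDerivAt (Psi ψ) (deriv (Psi ψ) σ) σ :=
    (hasDerivAt_Psi hψ hκ₁ hlow σ).differentiableAt.hasDerivAt
  obtain ⟨e, he⟩ := exists_orderIso_eq_of_le_deriv hPsi (inv_pos.2 hκ₂) hPsi_lower
  have hlog : ∀ σ, HasDerivAt (logPartition ψ) (e σ) σ := he ▸ hasDerivAt_logPartition hψ hκ₁ hlow
  have hmax {σ : ℝ} : (∀ τ, τ * x - logPartition ψ τ ≤ σ * x - logPartition ψ σ) ↔ e σ = x :=
    forall_mul_sub_le_iff_deriv_eq hlog e.monotone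
  have hW (x : ℝ) : HasDerivAt (W ψ) (e.symm x) x := hasDerivAt_legendreTransform hlog x
  have hpos : 0 < deriv (Psi ψ) (e.symm x) := (inv_pos.2 hκ₂).trans_le (hPsi_lower _)
  have hW' : HasDerivAt (deriv (W ψ)) (1 / deriv (Psi ψ) (e.symm x)) x := by
    rw [funext fun x => (hW x).deriv, one_div]
    exact hasDerivAt_orderIso_symm (he ▸ hPsi _) hpos.ne'
  refine ⟨e.symm x, hmax.2 (e.apply_symm_apply x),
    fun σ' hσ' => (e.symm_apply_eq.2 (hmax.1 hσ').symm).symm,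
    he ▸ e.apply_symm_apply x, hW x, hW'.differentiableAt, hW'.deriv, ?_⟩
  rw [hW'.deriv, le_div_iff₀ hpos, div_le_iff₀ hpos]
  exact hbounds (e.symm x)

/-- the supremum defining `W(x)` is attained at a unique `σ_x`, which is
characterized by `Ψ(σ_x) = x`; moreover `W'(x) = σ_x`, `W''(x) = 1/Ψ'(σ_x)` and
`κ₁ ≤ W''(x) ≤ κ₂`. -/
theorem legendre_transform_properties
    (ψ : ℝ → ℝ) (κ₁ κ₂ : ℝ)
    (hψ : ContDiff ℝ 2 ψ) (hκ₁ : 0 < κ₁) (hκ : κ₁ ≤ κ₂)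
    (hψ'' : ∀ y : ℝ, κ₁ ≤ deriv (deriv ψ) y ∧ deriv (deriv ψ) y ≤ κ₂) :
    ∀ x : ℝ, ∃ σx : ℝ,
      (∀ σ : ℝ,
        σ * x - Real.log (∫ y : ℝ, Real.exp (-ψ y + σ * y)) ≤
        σx * x - Real.log (∫ y : ℝ, Real.exp (-ψ y + σx * y))) ∧
      (∀ σ' : ℝ,
        (∀ σ : ℝ,
          σ * x - Real.log (∫ y : ℝ, Real.exp (-ψ y + σ * y)) ≤
          σ' * x - Real.log (∫ y : ℝ, Real.exp (-ψ y + σ' * y))) → σ' = σx) ∧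
      Psi ψ σx = x ∧
      HasDerivAt (W ψ) σx x ∧
      DifferentiableAt ℝ (deriv (W ψ)) x ∧
      deriv (deriv (W ψ)) x = 1 / deriv (Psi ψ) σx ∧
      κ₁ ≤ deriv (deriv (W ψ)) x ∧ deriv (deriv (W ψ)) x ≤ κ₂ := by
  have hψ' : Differentiable ℝ (deriv ψ) := hψ.differentiable_deriv_two
  exact legendre_transform_properties_general
    (fun y => (hψ.differentiable two_ne_zero y).hasDerivAt) hκ₁
    (monotone_sub_mul_of_le_deriv hψ' fun y => (hψ'' y).1)
    (monotone_mul_sub_of_deriv_le hψ' fun y => (hψ'' y).2)
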